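/- arXiv:1904.13317 — 2 statements merged into one kernel-verified Lean document; each statement's English description precedes it below -/
import Mathlib

section
/- For every i ∈ {1,…,n}, the gravity torque g_i(q) = ∂U/∂q_i, with potential energy U(q) = Σ_{j=1}^n m_j g_0^T c_j(q), is a polynomial function of the augmented position variables: there exists a real multivariate polynomial in formal variables c_r, s_r (r ∈ I_r) and x_p (p ∈ I_p), of total degree at most n, whose every monomial satisfies deg(c_b) + deg(s_b) ≤ 1 for each b ∈ I_r and deg(x_p) ≤ 1 for each p ∈ I_p, and whose evaluation at c_r = cos(q_r), s_r = sin(q_r), x_p = q_p equals g_i(q) for all q ∈ ℝ^n. -/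
/-!
Each joint coordinate enters the kinematics only through functions of one variable from a small
space: `a + b cos + c sin` for a revolute joint, `a + b t` for a prismatic one
(`IsJointFun`). The function space `jointSpan rev k` is spanned by the products
`q ↦ ∏ b, φ b (q b)` of such functions, with trivial factors for the joints `b ≥ k`.

The entries of `R_j^0` lie in `jointSpan rev j`, because each further link multiplies by a matrix
whose entries are joint functions of a coordinate not used before (`jointSpan_mul`). Hence each
term of the potential energy lies in `jointSpan rev n`. This space is closed under partial
differentiation (`jointSpan_hasDerivAt`), because the derivative of a joint function is again a
joint function and only one factor of the product depends on the differentiated coordinate. So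
the gravity torque lies in it too. Finally, a product of joint functions is the evaluation of a
product of linear polynomials in disjoint groups of variables, at most one variable of each group
occurring in each monomial; this is the required multilinearity, and it bounds the total degree by
the number of joints.
-/

noncomputable section

open Matrix Real

/-- Elementary rotation about the z-axis. -/
def RzMat (θ : ℝ) : Matrix (Fin 3) (Fin 3) ℝ :=
  !![Real.cos θ, -Real.sin θ, 0;
     Real.sin θ, Real.cos θ, 0;
     0, 0, 1]

/-- Elementary rotation about the x-axis. -/
def RxMat (α : ℝ) : Matrix (Fin 3) (Fin 3) ℝ :=
  !![1, 0, 0;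
     0, Real.cos α, -Real.sin α;
     0, Real.sin α, Real.cos α]

/-- DH joint angle `θ_b(q)`; `rev b = true` means that joint `b` is revolute
(`θ_b = θ0_b + q_b`), otherwise it is prismatic (`θ_b = θ0_b`). -/
def dhTheta {n : ℕ} (rev : Fin n → Bool) (θ0 : Fin n → ℝ) (q : Fin n → ℝ) (b : Fin n) : ℝ :=
  θ0 b + if rev b then q b else 0

/-- DH joint offset `d_b(q)`: `d_b = d0_b` for a revolute joint, `d_b = d0_b + q_b`
for a prismatic one. -/
def dhD {n : ℕ} (rev : Fin n → Bool) (d0 : Fin n → ℝ) (q : Fin n → ℝ) (b : Fin n) : ℝ :=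
  d0 b + if rev b then 0 else q b

/-- Relative link rotation `R_b^{b-1}(q) = R_z(θ_b) R_x(α_b)`
(0-based index `b : Fin n` for joint `b+1`). -/
def dhRrel {n : ℕ} (rev : Fin n → Bool) (θ0 αDH : Fin n → ℝ) (q : Fin n → ℝ) (b : Fin n) :
    Matrix (Fin 3) (Fin 3) ℝ :=
  RzMat (dhTheta rev θ0 q b) * RxMat (αDH b)

/-- Cumulative rotation `R_i^0(q) = R_1^0(q) ⋯ R_i^{i-1}(q)` (meaningful for `i ≤ n`),
with `R_0^0 = 1`. -/
def dhR0 {n : ℕ} (rev : Fin n → Bool) (θ0 αDH : Fin n → ℝ) (q : Fin n → ℝ) :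
    ℕ → Matrix (Fin 3) (Fin 3) ℝ
  | 0 => 1
  | j + 1 =>
      dhR0 rev θ0 αDH q j * (if h : j < n then dhRrel rev θ0 αDH q ⟨j, h⟩ else 1)

/-- Relative link translation `l_b^{b-1}(q) = (0,0,d_b)ᵀ + R_z(θ_b) (a_b,0,0)ᵀ`. -/
def dhLrel {n : ℕ} (rev : Fin n → Bool) (θ0 d0 aDH : Fin n → ℝ) (q : Fin n → ℝ) (b : Fin n) :
    Fin 3 → ℝ :=
  ![0, 0, dhD rev d0 q b] + (RzMat (dhTheta rev θ0 q b)).mulVec ![aDH b, 0, 0]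

/-- Center of mass `c_i(q) = Σ_{j=1}^{i} R_{j-1}^0(q) l_j^{j-1}(q) + R_i^0(q) c_i^i`
(0-based index `i : Fin n` for link `i+1`; `cloc i` is the constant `c_i^i`). -/
def dhCom {n : ℕ} (rev : Fin n → Bool) (θ0 d0 aDH αDH : Fin n → ℝ)
    (cloc : Fin n → Fin 3 → ℝ) (q : Fin n → ℝ) (i : Fin n) : Fin 3 → ℝ :=
  (∑ j : Fin n, if j ≤ i then (dhR0 rev θ0 αDH q j.val).mulVec (dhLrel rev θ0 d0 aDH q j) else 0)
    + (dhR0 rev θ0 αDH q (i.val + 1)).mulVec (cloc i)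

/-- Partial derivative of `f : ℝⁿ → ℝ` with respect to the `k`-th coordinate, at `q`. -/
def pd {n : ℕ} (f : (Fin n → ℝ) → ℝ) (k : Fin n) (q : Fin n → ℝ) : ℝ :=
  deriv (fun t => f (Function.update q k t)) (q k)

/-- Linear Jacobian `J_i(q) ∈ ℝ^{3×n}`, whose `k`-th column is `∂c_i/∂q_k`. -/
def dhJlin {n : ℕ} (rev : Fin n → Bool) (θ0 d0 aDH αDH : Fin n → ℝ)
    (cloc : Fin n → Fin 3 → ℝ) (q : Fin n → ℝ) (i : Fin n) : Matrix (Fin 3) (Fin n) ℝ :=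
  Matrix.of fun r k => pd (fun q' => dhCom rev θ0 d0 aDH αDH cloc q' i r) k q

/-- Angular Jacobian `J_{ω,i}(q) ∈ ℝ^{3×n}`: the `j`-th column is `λ_j R_{j-1}^0(q) e_3`
for `j ≤ i` and `0` for `j > i`, where `λ_j = 1` iff joint `j` is revolute. -/
def dhJang {n : ℕ} (rev : Fin n → Bool) (θ0 αDH : Fin n → ℝ) (q : Fin n → ℝ) (i : Fin n) :
    Matrix (Fin 3) (Fin n) ℝ :=
  Matrix.of fun r j =>
    if j ≤ i then
      (if rev j then (1 : ℝ) else 0) * (dhR0 rev θ0 αDH q j.val).mulVec ![0, 0, 1] r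
    else 0

/-- Inertia matrix
`B(q) = Σ_i [ m_i J_i(q)ᵀ J_i(q) + J_{ω,i}(q)ᵀ R_i^0(q) I_i (R_i^0(q))ᵀ J_{ω,i}(q) ]`. -/
def dhB {n : ℕ} (rev : Fin n → Bool) (θ0 d0 aDH αDH : Fin n → ℝ)
    (cloc : Fin n → Fin 3 → ℝ) (m : Fin n → ℝ) (Iner : Fin n → Matrix (Fin 3) (Fin 3) ℝ)
    (q : Fin n → ℝ) : Matrix (Fin n) (Fin n) ℝ :=
  ∑ i : Fin n,
    (m i • ((dhJlin rev θ0 d0 aDH αDH cloc q i)ᵀ * dhJlin rev θ0 d0 aDH αDH cloc q i)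
      + (dhJang rev θ0 αDH q i)ᵀ * dhR0 rev θ0 αDH q (i.val + 1) * Iner i *
          (dhR0 rev θ0 αDH q (i.val + 1))ᵀ * dhJang rev θ0 αDH q i)

/-- `i`-th component of the Coriolis contribution
`(C(q,q̇) q̇)_i = Σ_j Σ_k ( ∂b_{ij}/∂q_k − (1/2) ∂b_{jk}/∂q_i ) q̇_k q̇_j`. -/
def dhCor {n : ℕ} (rev : Fin n → Bool) (θ0 d0 aDH αDH : Fin n → ℝ)
    (cloc : Fin n → Fin 3 → ℝ) (m : Fin n → ℝ) (Iner : Fin n → Matrix (Fin 3) (Fin 3) ℝ)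
    (q qd : Fin n → ℝ) (i : Fin n) : ℝ :=
  ∑ j : Fin n, ∑ k : Fin n,
    (pd (fun q' => dhB rev θ0 d0 aDH αDH cloc m Iner q' i j) k q
        - (1 / 2) * pd (fun q' => dhB rev θ0 d0 aDH αDH cloc m Iner q' j k) i q)
      * qd k * qd j

/-- Potential energy `U(q) = Σ_j m_j g_0ᵀ c_j(q)`. -/
def dhU {n : ℕ} (rev : Fin n → Bool) (θ0 d0 aDH αDH : Fin n → ℝ)
    (cloc : Fin n → Fin 3 → ℝ) (m : Fin n → ℝ) (g0 : Fin 3 → ℝ) (q : Fin n → ℝ) : ℝ :=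
  ∑ j : Fin n, m j * ∑ r : Fin 3, g0 r * dhCom rev θ0 d0 aDH αDH cloc q j r

/-- Gravity torque `g_i(q) = ∂U/∂q_i`. -/
def dhGrav {n : ℕ} (rev : Fin n → Bool) (θ0 d0 aDH αDH : Fin n → ℝ)
    (cloc : Fin n → Fin 3 → ℝ) (m : Fin n → ℝ) (g0 : Fin 3 → ℝ)
    (q : Fin n → ℝ) (i : Fin n) : ℝ :=
  pd (dhU rev θ0 d0 aDH αDH cloc m g0) i q

/-- Inverse dynamics torque `τ_i(q,q̇,q̈) = ( B(q) q̈ + C(q,q̇) q̇ + g(q) )_i`. -/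
def dhTau {n : ℕ} (rev : Fin n → Bool) (θ0 d0 aDH αDH : Fin n → ℝ)
    (cloc : Fin n → Fin 3 → ℝ) (m : Fin n → ℝ) (Iner : Fin n → Matrix (Fin 3) (Fin 3) ℝ)
    (g0 : Fin 3 → ℝ) (q qd qdd : Fin n → ℝ) (i : Fin n) : ℝ :=
  (∑ k : Fin n, dhB rev θ0 d0 aDH αDH cloc m Iner q i k * qdd k)
    + dhCor rev θ0 d0 aDH αDH cloc m Iner q qd i
    + dhGrav rev θ0 d0 aDH αDH cloc m g0 q i

/-- Formal position variables: `.inl b ↦ c_b = cos q_b`, `.inr (.inl b) ↦ s_b = sin q_b`,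
`.inr (.inr b) ↦ x_b = q_b`. -/
abbrev PosVar (n : ℕ) := Fin n ⊕ (Fin n ⊕ Fin n)

/-- The formal variable `c_b` (for `cos q_b`). -/
def cVar {n : ℕ} (b : Fin n) : PosVar n := Sum.inl b

/-- The formal variable `s_b` (for `sin q_b`). -/
def sVar {n : ℕ} (b : Fin n) : PosVar n := Sum.inr (Sum.inl b)

/-- The formal variable `x_b` (for the prismatic coordinate `q_b`). -/
def xVar {n : ℕ} (b : Fin n) : PosVar n := Sum.inr (Sum.inr b)

/-- Evaluation of the formal position variables at a configuration `q`. -/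
def posEval {n : ℕ} (q : Fin n → ℝ) : PosVar n → ℝ :=
  Sum.elim (fun b => Real.cos (q b)) (Sum.elim (fun b => Real.sin (q b)) fun b => q b)

/-- Index set of the velocity-product variables `v_{jk}`, `j ≤ k`. -/
abbrev VelIdx (n : ℕ) := {pr : Fin n × Fin n // pr.1 ≤ pr.2}

/-- Formal dynamic variables: the position variables together with the velocity products
`v_{jk}` and the accelerations `a_k`. -/
abbrev DynVar (n : ℕ) := PosVar n ⊕ (VelIdx n ⊕ Fin n)

/-- The formal variable `v_{jk}` (for `q̇_j q̇_k`). -/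
def vVar {n : ℕ} (jk : VelIdx n) : DynVar n := Sum.inr (Sum.inl jk)

/-- The formal variable `a_k` (for `q̈_k`). -/
def aVar {n : ℕ} (k : Fin n) : DynVar n := Sum.inr (Sum.inr k)

/-- Evaluation of the formal dynamic variables at `(q, q̇, q̈)`. -/
def dynEval {n : ℕ} (q qd qdd : Fin n → ℝ) : DynVar n → ℝ :=
  Sum.elim (posEval q) (Sum.elim (fun jk => qd jk.val.1 * qd jk.val.2) qdd)

/-! ### Functions of a single joint coordinate -/

/-- Functions through which a joint coordinate may enter: affine combinations of `cos` and `sin`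
for a revolute joint (`r = true`), affine functions for a prismatic one (where `c` plays
no role). -/
def IsJointFun (r : Bool) (φ : ℝ → ℝ) : Prop :=
  ∃ a b c : ℝ, ∀ t, φ t = a + if r then b * Real.cos t + c * Real.sin t else b * t

lemma IsJointFun.const (r : Bool) (a : ℝ) : IsJointFun r fun _ => a :=
  ⟨a, 0, 0, fun t => by simp⟩

lemma IsJointFun.add {r : Bool} {φ ψ : ℝ → ℝ} (hφ : IsJointFun r φ) (hψ : IsJointFun r ψ) :
    IsJointFun r fun t => φ t + ψ t := by
  obtain ⟨a, b, c, h⟩ := hφ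
  obtain ⟨a', b', c', h'⟩ := hψ
  refine ⟨a + a', b + b', c + c', fun t => ?_⟩
  simp only [h, h']
  cases r <;> simp <;> ring

lemma IsJointFun.mul_const {r : Bool} {φ : ℝ → ℝ} (hφ : IsJointFun r φ) (x : ℝ) :
    IsJointFun r fun t => φ t * x := by
  obtain ⟨a, b, c, h⟩ := hφ
  refine ⟨a * x, b * x, c * x, fun t => ?_⟩
  simp only [h]
  cases r <;> simp <;> ring

lemma IsJointFun.hasDerivAt {r : Bool} {φ : ℝ → ℝ} (hφ : IsJointFun r φ) :
    ∃ φ' : ℝ → ℝ, IsJointFun r φ' ∧ ∀ t, HasDerivAt φ (φ' t) t := by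
  obtain ⟨a, b, c, h⟩ := hφ
  obtain rfl : φ = _ := funext h
  cases r
  · refine ⟨fun _ => b, .const _ b, fun t => ?_⟩
    simpa using ((hasDerivAt_id t).const_mul b).const_add a
  · refine ⟨fun t => c * Real.cos t + -b * Real.sin t, ⟨0, c, -b, fun t => by simp⟩, fun t => ?_⟩
    have := (((Real.hasDerivAt_cos t).const_mul b).add
      ((Real.hasDerivAt_sin t).const_mul c)).const_add a
    simp only [if_true]
    refine this.congr_deriv ?_
    ring

lemma isJointFun_RzMat (r : Bool) (θ : ℝ) (u v : Fin 3) :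
    IsJointFun r fun t => RzMat (θ + if r then t else 0) u v := by
  cases r
  · simpa using IsJointFun.const false (RzMat θ u v)
  · have hc : IsJointFun true fun t => Real.cos (θ + t) :=
      ⟨0, Real.cos θ, -Real.sin θ, fun t => by simp [Real.cos_add]; ring⟩
    have hs : IsJointFun true fun t => Real.sin (θ + t) :=
      ⟨0, Real.sin θ, Real.cos θ, fun t => by simp [Real.sin_add]⟩
    have hs' : IsJointFun true fun t => -Real.sin (θ + t) := by
      simpa using hs.mul_const (-1)
    fin_cases u <;> fin_cases v <;>
      first
      | simpa [RzMat] using hc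
      | simpa [RzMat] using hs
      | simpa [RzMat] using hs'
      | simpa [RzMat] using IsJointFun.const true 0
      | simpa [RzMat] using IsJointFun.const true 1

lemma isJointFun_dhRrel {n : ℕ} (rev : Fin n → Bool) (θ0 αDH : Fin n → ℝ) (b : Fin n)
    (u v : Fin 3) :
    ∃ φ, IsJointFun (rev b) φ ∧ ∀ q, dhRrel rev θ0 αDH q b u v = φ (q b) := by
  refine ⟨fun t => (RzMat (θ0 b + if rev b then t else 0) * RxMat (αDH b)) u v, ?_, fun q => rfl⟩
  simp only [Matrix.mul_apply, Fin.sum_univ_three]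
  exact (((isJointFun_RzMat _ _ _ _).mul_const _).add
    ((isJointFun_RzMat _ _ _ _).mul_const _)).add ((isJointFun_RzMat _ _ _ _).mul_const _)

lemma isJointFun_dhLrel {n : ℕ} (rev : Fin n → Bool) (θ0 d0 aDH : Fin n → ℝ) (b : Fin n)
    (u : Fin 3) :
    ∃ φ, IsJointFun (rev b) φ ∧ ∀ q, dhLrel rev θ0 d0 aDH q b u = φ (q b) := by
  refine ⟨fun t => (![0, 0, d0 b + if rev b then 0 else t] : Fin 3 → ℝ) u +
    (RzMat (θ0 b + if rev b then t else 0)).mulVec ![aDH b, 0, 0] u, ?_, fun q => rfl⟩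
  refine IsJointFun.add ?_ ?_
  · have h : IsJointFun (rev b) fun t => d0 b + if rev b then 0 else t :=
      ⟨d0 b, if rev b then 0 else 1, 0, fun t => by cases rev b <;> simp⟩
    fin_cases u
    · exact .const _ 0
    · exact .const _ 0
    · exact h
  · simp only [Matrix.mulVec, dotProduct, Fin.sum_univ_three]
    exact (((isJointFun_RzMat _ _ _ _).mul_const _).add
      ((isJointFun_RzMat _ _ _ _).mul_const _)).add ((isJointFun_RzMat _ _ _ _).mul_const _)

/-! ### Spans of products of joint functions -/

/-- The span of the products of one joint function per joint, in which only the first `k` joints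
(those with 0-based index below `k`) contribute a nontrivial factor. -/
def jointSpan {n : ℕ} (rev : Fin n → Bool) (k : ℕ) : Submodule ℝ ((Fin n → ℝ) → ℝ) :=
  Submodule.span ℝ {f | ∃ φ : Fin n → ℝ → ℝ, (∀ b, IsJointFun (rev b) (φ b)) ∧
    (∀ b : Fin n, k ≤ b.val → φ b = fun _ => 1) ∧ f = fun q => ∏ b, φ b (q b)}

lemma jointSpan_mono {n : ℕ} (rev : Fin n → Bool) {k l : ℕ} (h : k ≤ l) :
    jointSpan rev k ≤ jointSpan rev l := by
  refine Submodule.span_mono ?_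
  rintro f ⟨φ, h1, h2, h3⟩
  exact ⟨φ, h1, fun b hb => h2 b (h.trans hb), h3⟩

lemma prod_update_joint {n : ℕ} (φ : Fin n → ℝ → ℝ) (b : Fin n) (ψ : ℝ → ℝ) (q : Fin n → ℝ) :
    ∏ x, Function.update φ b ψ x (q x) = ψ (q b) * ∏ x ∈ {b}ᶜ, φ x (q x) := by
  rw [Fintype.prod_eq_mul_prod_compl b, Function.update_self]
  congr 1
  refine Finset.prod_congr rfl fun x hx => ?_
  rw [Function.update_of_ne (by simpa using hx)]

/-- Multiplication by a joint function of the first unused coordinate replaces the trivial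
factor of that coordinate. -/
lemma jointSpan_mul {n : ℕ} (rev : Fin n → Bool) (b : Fin n) {f : (Fin n → ℝ) → ℝ}
    (hf : f ∈ jointSpan rev b.val) {ψ : ℝ → ℝ} (hψ : IsJointFun (rev b) ψ) :
    (fun q => f q * ψ (q b)) ∈ jointSpan rev (b.val + 1) := by
  induction hf using Submodule.span_induction with
  | mem f hf =>
    obtain ⟨φ, h1, h2, rfl⟩ := hf
    refine Submodule.subset_span ⟨Function.update φ b ψ, fun x => ?_, fun x hx => ?_, ?_⟩
    · by_cases hx : x = b
      · subst hx; simpa using hψ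
      · simpa [hx] using h1 x
    · have hxb : x ≠ b := by rintro rfl; omega
      rw [Function.update_of_ne hxb]
      exact h2 x (by omega)
    · funext q
      simp only
      rw [prod_update_joint, Fintype.prod_eq_mul_prod_compl b, h2 b le_rfl]
      ring
  | zero =>
    convert (jointSpan rev (b.val + 1)).zero_mem using 1
    funext q
    simp
  | add f g _ _ hf hg =>
    convert Submodule.add_mem _ hf hg using 1
    funext q
    simp [add_mul]
  | smul a f _ hf =>
    convert Submodule.smul_mem _ a hf using 1
    funext q
    simp [mul_assoc]

lemma dhR0_mem {n : ℕ} (rev : Fin n → Bool) (θ0 αDH : Fin n → ℝ) (j : ℕ) (hj : j ≤ n)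
    (u v : Fin 3) : (fun q => dhR0 rev θ0 αDH q j u v) ∈ jointSpan rev j := by
  induction j generalizing u v with
  | zero =>
    have h1 : (fun _ => 1 : (Fin n → ℝ) → ℝ) ∈ jointSpan rev 0 :=
      Submodule.subset_span ⟨fun _ _ => 1, fun b => .const _ 1, fun _ _ => rfl, by simp⟩
    convert Submodule.smul_mem _ ((1 : Matrix (Fin 3) (Fin 3) ℝ) u v) h1 using 1
    funext q
    simp [dhR0]
  | succ j ih =>
    have hj' : j < n := hj
    simp only [dhR0, dif_pos hj', Matrix.mul_apply]
    rw [show (fun q => ∑ w, dhR0 rev θ0 αDH q j u w * dhRrel rev θ0 αDH q ⟨j, hj'⟩ w v) =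
      ∑ w, fun q => dhR0 rev θ0 αDH q j u w * dhRrel rev θ0 αDH q ⟨j, hj'⟩ w v by
        funext q; simp]
    refine Submodule.sum_mem _ fun w _ => ?_
    obtain ⟨φ, hφ, h⟩ := isJointFun_dhRrel rev θ0 αDH ⟨j, hj'⟩ w v
    simp only [h]
    exact jointSpan_mul rev ⟨j, hj'⟩ (ih hj'.le u w) hφ

lemma dhCom_mem {n : ℕ} (rev : Fin n → Bool) (θ0 d0 aDH αDH : Fin n → ℝ)
    (cloc : Fin n → Fin 3 → ℝ) (i : Fin n) (r : Fin 3) :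
    (fun q => dhCom rev θ0 d0 aDH αDH cloc q i r) ∈ jointSpan rev n := by
  rw [show (fun q => dhCom rev θ0 d0 aDH αDH cloc q i r) =
      (∑ j : Fin n, if j ≤ i then
        ∑ w, fun q => dhR0 rev θ0 αDH q j.val r w * dhLrel rev θ0 d0 aDH q j w else 0) +
      ∑ w, cloc i w • fun q => dhR0 rev θ0 αDH q (i.val + 1) r w by
    funext q
    simp only [dhCom, Pi.add_apply, Finset.sum_apply, Matrix.mulVec, dotProduct, Pi.smul_apply,
      smul_eq_mul]
    congr 1
    · refine Finset.sum_congr rfl fun j _ => ?_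
      split_ifs <;> simp [Matrix.mulVec, dotProduct]
    · exact Finset.sum_congr rfl fun w _ => mul_comm _ _]
  refine Submodule.add_mem _ (Submodule.sum_mem _ fun j _ => ?_) (Submodule.sum_mem _ fun w _ =>
    Submodule.smul_mem _ _ (jointSpan_mono rev i.isLt (dhR0_mem rev θ0 αDH _ i.isLt r w)))
  split_ifs
  · refine Submodule.sum_mem _ fun w _ => ?_
    obtain ⟨φ, hφ, h⟩ := isJointFun_dhLrel rev θ0 d0 aDH j w
    simp only [h]
    exact jointSpan_mono rev j.isLt (jointSpan_mul rev j (dhR0_mem rev θ0 αDH _ j.isLt.le r w) hφ)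
  · exact Submodule.zero_mem _

lemma dhU_mem {n : ℕ} (rev : Fin n → Bool) (θ0 d0 aDH αDH : Fin n → ℝ)
    (cloc : Fin n → Fin 3 → ℝ) (m : Fin n → ℝ) (g0 : Fin 3 → ℝ) :
    dhU rev θ0 d0 aDH αDH cloc m g0 ∈ jointSpan rev n := by
  rw [show dhU rev θ0 d0 aDH αDH cloc m g0 =
      ∑ j : Fin n, m j • ∑ r : Fin 3, g0 r • fun q => dhCom rev θ0 d0 aDH αDH cloc q j r by
    funext q; simp [dhU]]
  exact Submodule.sum_mem _ fun j _ => Submodule.smul_mem _ _ (Submodule.sum_mem _ fun r _ =>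
    Submodule.smul_mem _ _ (dhCom_mem rev θ0 d0 aDH αDH cloc j r))

/-! ### Partial derivatives -/

lemma jointSpan_hasDerivAt {n : ℕ} (rev : Fin n → Bool) (i : Fin n) {f : (Fin n → ℝ) → ℝ}
    (hf : f ∈ jointSpan rev n) :
    ∃ f' ∈ jointSpan rev n, ∀ q, HasDerivAt (fun t => f (Function.update q i t)) (f' q) (q i) := by
  induction hf using Submodule.span_induction with
  | mem f hf =>
    obtain ⟨φ, h1, h2, rfl⟩ := hf
    obtain ⟨ψ, hψ, hd⟩ := (h1 i).hasDerivAt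
    refine ⟨_, Submodule.subset_span ⟨Function.update φ i ψ, fun x => ?_,
      fun x hx => absurd x.isLt (by omega), rfl⟩, fun q => ?_⟩
    · by_cases hx : x = i
      · subst hx; simpa using hψ
      · simpa [hx] using h1 x
    · have h : (fun t => ∏ b, φ b (Function.update q i t b)) =
          fun t => φ i t * ∏ x ∈ {i}ᶜ, φ x (q x) := by
        funext t
        rw [Fintype.prod_eq_mul_prod_compl i, Function.update_self]
        congr 1
        refine Finset.prod_congr rfl fun x hx => ?_
        rw [Function.update_of_ne (by simpa using hx)]
      simp only [h, prod_update_joint]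
      exact (hd (q i)).mul_const _
  | zero => exact ⟨0, Submodule.zero_mem _, fun q => hasDerivAt_const _ _⟩
  | add f g _ _ hf hg =>
    obtain ⟨f', hf', hf⟩ := hf
    obtain ⟨g', hg', hg⟩ := hg
    exact ⟨f' + g', Submodule.add_mem _ hf' hg', fun q => (hf q).add (hg q)⟩
  | smul a f _ hf =>
    obtain ⟨f', hf', hf⟩ := hf
    exact ⟨a • f', Submodule.smul_mem _ a hf', fun q => (hf q).const_mul a⟩

/-! ### Multilinear polynomials in the position variables -/

/-- Every monomial of `P` contains at most one variable of each joint in `T`, to the first power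
and of the kind belonging to the type of the joint, and no variable of a joint outside `T`. -/
def Multilin {n : ℕ} (rev : Fin n → Bool) (T : Finset (Fin n)) (P : MvPolynomial (PosVar n) ℝ) :
    Prop :=
  ∀ μ ∈ P.support, ∀ b : Fin n,
    μ (cVar b) + μ (sVar b) + μ (xVar b) ≤ (if b ∈ T then 1 else 0) ∧
    (rev b = false → μ (cVar b) = 0 ∧ μ (sVar b) = 0) ∧ (rev b = true → μ (xVar b) = 0)

lemma Multilin.add {n : ℕ} {rev : Fin n → Bool} {T : Finset (Fin n)}
    {P Q : MvPolynomial (PosVar n) ℝ} (hP : Multilin rev T P) (hQ : Multilin rev T Q) :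
    Multilin rev T (P + Q) := by
  classical
  intro μ hμ
  rcases Finset.mem_union.1 (MvPolynomial.support_add hμ) with h | h
  exacts [hP μ h, hQ μ h]

lemma Multilin.smul {n : ℕ} {rev : Fin n → Bool} {T : Finset (Fin n)}
    {P : MvPolynomial (PosVar n) ℝ} (hP : Multilin rev T P) (a : ℝ) :
    Multilin rev T (a • P) :=
  fun μ hμ => hP μ (MvPolynomial.support_smul hμ)

lemma Multilin.mul {n : ℕ} {rev : Fin n → Bool} {T T' : Finset (Fin n)} (hT : Disjoint T T')
    {P Q : MvPolynomial (PosVar n) ℝ} (hP : Multilin rev T P) (hQ : Multilin rev T' Q) :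
    Multilin rev (T ∪ T') (P * Q) := by
  classical
  intro μ hμ b
  obtain ⟨μ₁, h₁, μ₂, h₂, rfl⟩ := Finset.mem_add.1 (MvPolynomial.support_mul P Q hμ)
  obtain ⟨a1, a2, a3⟩ := hP μ₁ h₁ b
  obtain ⟨b1, b2, b3⟩ := hQ μ₂ h₂ b
  have hb : ¬ (b ∈ T ∧ b ∈ T') := fun h => Finset.disjoint_left.1 hT h.1 h.2
  simp only [Finsupp.add_apply, Finset.mem_union]
  refine ⟨?_, fun h => ⟨?_, ?_⟩, fun h => ?_⟩
  · by_cases hbT : b ∈ T <;> by_cases hbT' : b ∈ T' <;> simp_all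
  · simp [(a2 h).1, (b2 h).1]
  · simp [(a2 h).2, (b2 h).2]
  · simp [a3 h, b3 h]

lemma multilin_one {n : ℕ} (rev : Fin n → Bool) (T : Finset (Fin n)) : Multilin rev T 1 := by
  classical
  intro μ hμ b
  rw [MvPolynomial.support_one, Finset.mem_singleton] at hμ
  subst hμ
  simp

lemma multilin_X {n : ℕ} (rev : Fin n → Bool) (b : Fin n) (v : PosVar n)
    (hv : rev b = true ∧ (v = cVar b ∨ v = sVar b) ∨ rev b = false ∧ v = xVar b) :
    Multilin rev {b} (MvPolynomial.X v) := by
  classical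
  intro μ hμ b'
  rw [MvPolynomial.support_X, Finset.mem_singleton] at hμ
  subst hμ
  by_cases hb : b' = b
  · subst hb
    rcases hv with ⟨h, rfl | rfl⟩ | ⟨h, rfl⟩ <;>
      simp [h, cVar, sVar, xVar]
  · rcases hv with ⟨h, rfl | rfl⟩ | ⟨h, rfl⟩ <;>
      simp [hb, cVar, sVar, xVar]

lemma IsJointFun.exists_poly {n : ℕ} {rev : Fin n → Bool} {b : Fin n} {φ : ℝ → ℝ}
    (hφ : IsJointFun (rev b) φ) :
    ∃ P, Multilin rev {b} P ∧ ∀ q, MvPolynomial.eval (posEval q) P = φ (q b) := by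
  obtain ⟨x, y, z, h⟩ := hφ
  cases hb : rev b
  · refine ⟨x • 1 + y • MvPolynomial.X (xVar b), ((multilin_one rev _).smul x).add
      ((multilin_X rev b _ (.inr ⟨hb, rfl⟩)).smul y), fun q => ?_⟩
    simp [h, hb, MvPolynomial.smul_eval, posEval, xVar]
  · refine ⟨x • 1 + (y • MvPolynomial.X (cVar b) + z • MvPolynomial.X (sVar b)),
      ((multilin_one rev _).smul x).add
      (((multilin_X rev b _ (.inl ⟨hb, .inl rfl⟩)).smul y).add
        ((multilin_X rev b _ (.inl ⟨hb, .inr rfl⟩)).smul z)), fun q => ?_⟩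
    simp [h, hb, MvPolynomial.smul_eval, posEval, cVar, sVar]

lemma multilin_prod {n : ℕ} {rev : Fin n → Bool} {p : Fin n → MvPolynomial (PosVar n) ℝ}
    (hp : ∀ b, Multilin rev {b} (p b)) (T : Finset (Fin n)) :
    Multilin rev T (∏ b ∈ T, p b) := by
  classical
  induction T using Finset.induction_on with
  | empty => simpa using multilin_one rev ∅
  | insert b T hb ih =>
    rw [Finset.prod_insert hb, Finset.insert_eq]
    exact (hp b).mul (by simpa using hb) ih

lemma jointSpan_exists_poly {n : ℕ} {rev : Fin n → Bool} {k : ℕ} {f : (Fin n → ℝ) → ℝ}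
    (hf : f ∈ jointSpan rev k) :
    ∃ P, Multilin rev Finset.univ P ∧ ∀ q, MvPolynomial.eval (posEval q) P = f q := by
  induction hf using Submodule.span_induction with
  | mem f hf =>
    obtain ⟨φ, h1, h2, rfl⟩ := hf
    choose p hp hpe using fun b => (h1 b).exists_poly
    exact ⟨∏ b, p b, multilin_prod hp _, fun q => by simp [hpe]⟩
  | zero => exact ⟨0, fun μ hμ => by simp at hμ, fun q => by simp⟩
  | add f g _ _ hf hg =>
    obtain ⟨P, hP, hPe⟩ := hf
    obtain ⟨Q, hQ, hQe⟩ := hg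
    exact ⟨P + Q, hP.add hQ, fun q => by simp [hPe, hQe]⟩
  | smul a f _ hf =>
    obtain ⟨P, hP, hPe⟩ := hf
    exact ⟨a • P, hP.smul a, fun q => by simp [hPe, MvPolynomial.smul_eval]⟩

lemma Multilin.totalDegree_le {n : ℕ} {rev : Fin n → Bool} {P : MvPolynomial (PosVar n) ℝ}
    (hP : Multilin rev Finset.univ P) : P.totalDegree ≤ n := by
  refine Finset.sup_le fun μ hμ => ?_
  rw [Finsupp.sum_fintype _ _ (fun _ => rfl), Fintype.sum_sum_type, Fintype.sum_sum_type,
    ← Finset.sum_add_distrib, ← Finset.sum_add_distrib]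
  calc _ ≤ ∑ _b : Fin n, 1 := Finset.sum_le_sum fun b _ => by
        have := (hP μ hμ b).1
        simp only [Finset.mem_univ, if_true, cVar, sVar, xVar] at this
        omega
    _ = n := by simp

/-- The gravity torque `g_i(q) = ∂U/∂q_i`, with
`U(q) = Σ_j m_j g_0ᵀ c_j(q)`, is a polynomial of total degree at most `n` in the formal
variables `c_r, s_r` (`r ∈ I_r`) and `x_p` (`p ∈ I_p`), in which every monomial satisfies
`deg c_b + deg s_b ≤ 1` for every `b ∈ I_r` and `deg x_p ≤ 1` for every `p ∈ I_p`. -/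
theorem gravity_torque_polynomial
    {n : ℕ} (rev : Fin n → Bool) (θ0 d0 aDH αDH : Fin n → ℝ)
    (cloc : Fin n → Fin 3 → ℝ) (m : Fin n → ℝ) (g0 : Fin 3 → ℝ) (i : Fin n) :
    ∃ P : MvPolynomial (PosVar n) ℝ,
      P.totalDegree ≤ n ∧
      (∀ μ ∈ P.support, ∀ b : Fin n,
        μ (cVar b) + μ (sVar b) ≤ 1 ∧
        μ (xVar b) ≤ 1 ∧
        (rev b = false → μ (cVar b) = 0 ∧ μ (sVar b) = 0) ∧
        (rev b = true → μ (xVar b) = 0)) ∧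
      ∀ q : Fin n → ℝ,
        MvPolynomial.eval (posEval q) P = dhGrav rev θ0 d0 aDH αDH cloc m g0 q i := by
  obtain ⟨f', hf', hd⟩ := jointSpan_hasDerivAt rev i (dhU_mem rev θ0 d0 aDH αDH cloc m g0)
  obtain ⟨P, hP, hPe⟩ := jointSpan_exists_poly hf'
  refine ⟨P, hP.totalDegree_le, fun μ hμ b => ?_, fun q => ?_⟩
  · obtain ⟨h1, h2, h3⟩ := hP μ hμ b
    simp only [Finset.mem_univ, if_true] at h1
    exact ⟨by omega, by omega, h2, h3⟩
  · rw [hPe]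
    exact (hd q).deriv.symm
end
end

section
/- The rigid-body inverse dynamics lies in the span of the GIP kernel's monomial features: for every joint i there exist real weights w_α, indexed by the multi-indices α ∈ A, such that for all q, qdot, qddot ∈ ℝ^n, the i-th torque component τ_i(q, qdot, qddot) = ( B(q) qddot + C(q, qdot) qdot + g(q) )_i equals Σ_{α ∈ A} w_α x̄^α, where x̄ = (q_c, q_s, q_p, qdot_v, qddot) is the augmented input built from (q, qdot, qddot) and A is the set of multi-indices α such that: for each revolute index b, the degrees of q_{c_b} and q_{s_b} in α sum to at most 2; for each prismatic index b, the degree of q_{p_b} in α is at most 2; and the total degree of α restricted to the (qddot, qdot_v) coordinates is at most 1. -/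
/-!
Call a function of the configuration of multidegree at most `D` if it is a linear combination of
monomials having degree at most `D b` in `(cos q_b, sin q_b)` for each revolute joint `b`, and at
most `D b` in `q_b` for each prismatic one. Degrees add under products, and partial derivatives do
not raise them (`feat_pd`). The link rotation and the link translation of joint `b` have degree one
in joint `b` and zero in all others, so every center of mass, and hence every linear Jacobian, has
degree at most one in each joint.

The angular part of the inertia matrix looks quartic, but it equals `Wᵀ I_i W` with
`W = R_iᵀ J_{ω,i}`, and the columns of `W` are the third columns of `R_iᵀ R_{j-1}`, up to the factor
`λ_j`. By orthogonality of rotations the factors common to `R_i` and `R_{j-1}` cancel, so `W` has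
degree at most one in each joint (`feat_R0rel`, `feat_RtJang`). Therefore `B` has degree at most two
(`feat_B`), and so do its derivatives and the gravity term. The torque is linear in accelerations
and velocity products with such coefficients, which gives the admissible monomials.
-/

noncomputable section

open Matrix Real

/-- The monomial function `q ↦ ∏_b cos(q_b)^{a_b} sin(q_b)^{s_b} q_b^{x_b}`. -/
def posMono {n : ℕ} (a s x : Fin n → ℕ) (q : Fin n → ℝ) : ℝ :=
  ∏ b, (Real.cos (q b) ^ a b * Real.sin (q b) ^ s b * q b ^ x b)

/-- The exponents `(a, s, x)` have degree at most `D b` in joint `b`, using only `cos` and `sin`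
of revolute coordinates and only powers of prismatic ones. -/
def PosAdm {n : ℕ} (rev : Fin n → Bool) (D a s x : Fin n → ℕ) : Prop :=
  ∀ b, a b + s b ≤ (if rev b then D b else 0) ∧ x b ≤ (if rev b then 0 else D b)

/-- The space of functions of the configuration spanned by the monomials of multidegree at most
`D`, where `D b` bounds the degree in joint `b`. -/
def Feat {n : ℕ} (rev : Fin n → Bool) (D : Fin n → ℕ) : Submodule ℝ ((Fin n → ℝ) → ℝ) :=
  Submodule.span ℝ {f | ∃ a s x, PosAdm rev D a s x ∧ f = posMono a s x}

/-! ### Closure properties of the spaces `Feat` -/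

section feat

variable {n : ℕ} {rev : Fin n → Bool}

theorem feat_mono {D E : Fin n → ℕ} (h : ∀ b, D b ≤ E b) : Feat rev D ≤ Feat rev E := by
  apply Submodule.span_mono
  rintro f ⟨a, s, x, hadm, rfl⟩
  refine ⟨a, s, x, fun b => ?_, rfl⟩
  have := hadm b
  have := h b
  split_ifs at * <;> omega

theorem feat_mul {D E : Fin n → ℕ} {f g : (Fin n → ℝ) → ℝ} (hf : f ∈ Feat rev D)
    (hg : g ∈ Feat rev E) : (fun q => f q * g q) ∈ Feat rev (fun b => D b + E b) := by
  have h : f * g ∈ Feat rev D * Feat rev E := Submodule.mul_mem_mul hf hg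
  rw [Feat, Feat, Submodule.span_mul_span] at h
  refine Submodule.span_mono ?_ h
  rintro _ ⟨_, ⟨a, s, x, h1, rfl⟩, _, ⟨a', s', x', h2, rfl⟩, rfl⟩
  refine ⟨a + a', s + s', x + x', fun b => ?_, ?_⟩
  · have := h1 b
    have := h2 b
    simp only [Pi.add_apply]
    split_ifs at * <;> omega
  · funext q
    simp only [posMono, Pi.mul_apply, Pi.add_apply, ← Finset.prod_mul_distrib]
    refine Finset.prod_congr rfl fun b _ => ?_
    ring

theorem feat_mul' {D E F : Fin n → ℕ} {f g : (Fin n → ℝ) → ℝ} (hf : f ∈ Feat rev D)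
    (hg : g ∈ Feat rev E) (h : ∀ b, D b + E b ≤ F b) : (fun q => f q * g q) ∈ Feat rev F :=
  feat_mono h (feat_mul hf hg)

theorem feat_add {D : Fin n → ℕ} {f g : (Fin n → ℝ) → ℝ} (hf : f ∈ Feat rev D)
    (hg : g ∈ Feat rev D) : (fun q => f q + g q) ∈ Feat rev D :=
  Submodule.add_mem _ hf hg

theorem feat_sub {D : Fin n → ℕ} {f g : (Fin n → ℝ) → ℝ} (hf : f ∈ Feat rev D)
    (hg : g ∈ Feat rev D) : (fun q => f q - g q) ∈ Feat rev D :=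
  Submodule.sub_mem _ hf hg

theorem feat_smul {D : Fin n → ℕ} {f : (Fin n → ℝ) → ℝ} (c : ℝ) (hf : f ∈ Feat rev D) :
    (fun q => c * f q) ∈ Feat rev D :=
  Submodule.smul_mem _ c hf

theorem feat_sum {ι : Type*} (t : Finset ι) {D : Fin n → ℕ} {f : ι → (Fin n → ℝ) → ℝ}
    (hf : ∀ i ∈ t, f i ∈ Feat rev D) : (fun q => ∑ i ∈ t, f i q) ∈ Feat rev D := by
  have := Submodule.sum_mem _ hf
  convert this using 1
  funext q
  simp

theorem feat_const (D : Fin n → ℕ) (c : ℝ) : (fun _ => c) ∈ Feat rev D := by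
  have h : (fun _ => (1 : ℝ)) ∈ Feat rev D := by
    apply Submodule.subset_span
    refine ⟨0, 0, 0, fun b => ?_, ?_⟩
    · simp
    · funext q
      simp [posMono]
  simpa using feat_smul c h

theorem feat_cos {D : Fin n → ℕ} {b : Fin n} (hb : rev b = true) (hD : 1 ≤ D b) :
    (fun q : Fin n → ℝ => Real.cos (q b)) ∈ Feat rev D := by
  apply Submodule.subset_span
  refine ⟨Pi.single b 1, 0, 0, fun j => ?_, ?_⟩
  · by_cases h : j = b
    · subst h
      simp [hb, hD]
    · simp [h]
  · funext q
    simp [posMono, Pi.single_apply, Finset.prod_ite_eq', pow_ite]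

theorem feat_sin {D : Fin n → ℕ} {b : Fin n} (hb : rev b = true) (hD : 1 ≤ D b) :
    (fun q : Fin n → ℝ => Real.sin (q b)) ∈ Feat rev D := by
  apply Submodule.subset_span
  refine ⟨0, Pi.single b 1, 0, fun j => ?_, ?_⟩
  · by_cases h : j = b
    · subst h
      simp [hb, hD]
    · simp [h]
  · funext q
    simp [posMono, Pi.single_apply, Finset.prod_ite_eq', pow_ite]

theorem feat_coord {D : Fin n → ℕ} {b : Fin n} (hb : rev b = false) (hD : 1 ≤ D b) :
    (fun q : Fin n → ℝ => q b) ∈ Feat rev D := by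
  apply Submodule.subset_span
  refine ⟨0, 0, Pi.single b 1, fun j => ?_, ?_⟩
  · by_cases h : j = b
    · subst h
      simp [hb, hD]
    · simp [h]
  · funext q
    simp [posMono, Pi.single_apply, Finset.prod_ite_eq', pow_ite]

theorem posMono_update (a s x : Fin n → ℕ) (q : Fin n → ℝ) (k : Fin n) (t : ℝ) :
    posMono a s x (Function.update q k t) =
      (Real.cos t ^ a k * Real.sin t ^ s k * t ^ x k) *
        ∏ b ∈ Finset.univ.erase k, (Real.cos (q b) ^ a b * Real.sin (q b) ^ s b * q b ^ x b) := by
  rw [posMono, ← Finset.mul_prod_erase _ _ (Finset.mem_univ k)]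
  congr 1
  · simp
  · refine Finset.prod_congr rfl fun b hb => ?_
    rw [Function.update_of_ne (Finset.ne_of_mem_erase hb)]

/-- Replacing the exponents of joint `k` only changes the corresponding factor. -/
theorem posMono_change (a s x : Fin n → ℕ) (q : Fin n → ℝ) (k : Fin n) (a' s' x' : ℕ) :
    posMono (Function.update a k a') (Function.update s k s') (Function.update x k x') q =
      (Real.cos (q k) ^ a' * Real.sin (q k) ^ s' * q k ^ x') *
        ∏ b ∈ Finset.univ.erase k, (Real.cos (q b) ^ a b * Real.sin (q b) ^ s b * q b ^ x b) := by
  rw [posMono, ← Finset.mul_prod_erase _ _ (Finset.mem_univ k)]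
  congr 1
  · simp
  · refine Finset.prod_congr rfl fun b hb => ?_
    simp only [Function.update_of_ne (Finset.ne_of_mem_erase hb)]

theorem feat_change {D a s x : Fin n → ℕ} (h : PosAdm rev D a s x) (k : Fin n) (a' s' x' : ℕ)
    (hk : a' + s' ≤ (if rev k then D k else 0) ∧ x' ≤ (if rev k then 0 else D k)) :
    posMono (Function.update a k a') (Function.update s k s') (Function.update x k x')
      ∈ Feat rev D := by
  apply Submodule.subset_span
  refine ⟨_, _, _, fun b => ?_, rfl⟩
  by_cases hb : b = k
  · subst hb
    simpa using hk
  · simpa [hb] using h b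

theorem hasDerivAt_factor (a s x : ℕ) (t : ℝ) :
    HasDerivAt (fun t : ℝ => Real.cos t ^ a * Real.sin t ^ s * t ^ x)
      ((-(a : ℝ)) * (Real.cos t ^ (a - 1) * Real.sin t ^ (s + 1) * t ^ x)
        + s * (Real.cos t ^ (a + 1) * Real.sin t ^ (s - 1) * t ^ x)
        + x * (Real.cos t ^ a * Real.sin t ^ s * t ^ (x - 1))) t := by
  have h := (((Real.hasDerivAt_cos t).pow a).mul ((Real.hasDerivAt_sin t).pow s)).mul
    ((hasDerivAt_id t).pow x)
  refine HasDerivAt.congr_deriv (h.congr_of_eventuallyEq (Filter.Eventually.of_forall ?_)) ?_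
  · intro y
    simp
  · simp
    ring

/-- Differentiating with respect to any coordinate does not raise the degrees, because the
derivative exchanges `cos` and `sin` of a revolute coordinate. Differentiability is proved along
with it, since the additivity of `pd` needs it. -/
theorem feat_pd_aux {D : Fin n → ℕ} {f : (Fin n → ℝ) → ℝ} (hf : f ∈ Feat rev D) (k : Fin n) :
    (∀ q, DifferentiableAt ℝ (fun t => f (Function.update q k t)) (q k)) ∧
      (fun q => pd f k q) ∈ Feat rev D := by
  induction hf using Submodule.span_induction with
  | mem f hf =>
    obtain ⟨a, s, x, h, rfl⟩ := hf
    have key := fun q : Fin n → ℝ => (hasDerivAt_factor (a k) (s k) (x k) (q k)).mul_const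
      (∏ b ∈ Finset.univ.erase k, (Real.cos (q b) ^ a b * Real.sin (q b) ^ s b * q b ^ x b))
    simp only [← posMono_update] at key
    refine ⟨fun q => (key q).differentiableAt, ?_⟩
    have hk := h k
    have e : (fun q => pd (posMono a s x) k q) = fun q =>
        (-(a k : ℝ)) * posMono (Function.update a k (a k - 1)) (Function.update s k (s k + 1))
            (Function.update x k (x k)) q
          + s k * posMono (Function.update a k (a k + 1)) (Function.update s k (s k - 1))
            (Function.update x k (x k)) q
          + x k * posMono (Function.update a k (a k)) (Function.update s k (s k))
            (Function.update x k (x k - 1)) q := by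
      funext q
      rw [pd, (key q).deriv]
      simp only [posMono_change]
      ring
    rw [e]
    -- If an exponent vanishes, its term has coefficient `0`; otherwise the new exponents are
    -- admissible.
    refine feat_add (feat_add ?_ ?_) (feat_smul _ (feat_change h k _ _ _ ?_))
    · rcases Nat.eq_zero_or_pos (a k) with h0 | h0
      · simpa [h0] using feat_const D 0
      · exact feat_smul _ (feat_change h k _ _ _ (by split_ifs at * <;> omega))
    · rcases Nat.eq_zero_or_pos (s k) with h0 | h0
      · simpa [h0] using feat_const D 0
      · exact feat_smul _ (feat_change h k _ _ _ (by split_ifs at * <;> omega))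
    · split_ifs at * <;> omega
  | zero =>
    refine ⟨fun q => by simp, ?_⟩
    simpa [pd] using feat_const D 0
  | add f g _ _ ihf ihg =>
    refine ⟨fun q => (ihf.1 q).add (ihg.1 q), ?_⟩
    convert feat_add ihf.2 ihg.2 using 1
    funext q
    exact deriv_add (ihf.1 q) (ihg.1 q)
  | smul c f _ ih =>
    refine ⟨fun q => (ih.1 q).const_mul c, ?_⟩
    convert feat_smul c ih.2 using 1
    funext q
    exact deriv_const_mul c (ih.1 q)

theorem feat_pd {D : Fin n → ℕ} {f : (Fin n → ℝ) → ℝ} (hf : f ∈ Feat rev D) (k : Fin n) :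
    (fun q => pd f k q) ∈ Feat rev D :=
  (feat_pd_aux hf k).2

/-- Product of matrix-valued functions, entrywise in `Feat`. -/
theorem feat_matMul {ι κ μ : Type*} [Fintype κ] {D E F : Fin n → ℕ}
    {M : (Fin n → ℝ) → Matrix ι κ ℝ} {N : (Fin n → ℝ) → Matrix κ μ ℝ}
    (hM : ∀ r c, (fun q => M q r c) ∈ Feat rev D) (hN : ∀ r c, (fun q => N q r c) ∈ Feat rev E)
    (h : ∀ b, D b + E b ≤ F b) (r : ι) (c : μ) : (fun q => (M q * N q) r c) ∈ Feat rev F := by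
  simp only [Matrix.mul_apply]
  exact feat_sum _ fun j _ => feat_mul' (hM r j) (hN j c) h

theorem feat_mulVec {ι κ : Type*} [Fintype κ] {D E F : Fin n → ℕ}
    {M : (Fin n → ℝ) → Matrix ι κ ℝ} {v : (Fin n → ℝ) → κ → ℝ}
    (hM : ∀ r c, (fun q => M q r c) ∈ Feat rev D) (hv : ∀ r, (fun q => v q r) ∈ Feat rev E)
    (h : ∀ b, D b + E b ≤ F b) (r : ι) : (fun q => (M q).mulVec (v q) r) ∈ Feat rev F := by
  simp only [Matrix.mulVec, dotProduct]
  exact feat_sum _ fun j _ => feat_mul' (hM r j) (hv j) h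

end feat

/-! ### Kinematics -/

section kin

variable {n : ℕ} {rev : Fin n → Bool} (θ0 d0 aDH αDH : Fin n → ℝ)

theorem feat_cosTheta (b : Fin n) :
    (fun q => Real.cos (dhTheta rev θ0 q b)) ∈ Feat rev (Pi.single b 1) := by
  cases hb : rev b with
  | false => simpa [dhTheta, hb] using feat_const _ _
  | true =>
    simp only [dhTheta, hb, if_true, Real.cos_add]
    exact feat_sub (feat_smul _ (feat_cos hb (by simp))) (feat_smul _ (feat_sin hb (by simp)))

theorem feat_sinTheta (b : Fin n) :
    (fun q => Real.sin (dhTheta rev θ0 q b)) ∈ Feat rev (Pi.single b 1) := by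
  cases hb : rev b with
  | false => simpa [dhTheta, hb] using feat_const _ _
  | true =>
    simp only [dhTheta, hb, if_true, Real.sin_add]
    exact feat_add (feat_smul _ (feat_cos hb (by simp))) (feat_smul _ (feat_sin hb (by simp)))

theorem feat_dhD (b : Fin n) : (fun q => dhD rev d0 q b) ∈ Feat rev (Pi.single b 1) := by
  cases hb : rev b with
  | true => simpa [dhD, hb] using feat_const _ _
  | false =>
    simp only [dhD, hb]
    exact feat_add (feat_const _ _) (feat_coord hb (by simp))

theorem feat_Rz (b : Fin n) (r c : Fin 3) :
    (fun q => RzMat (dhTheta rev θ0 q b) r c) ∈ Feat rev (Pi.single b 1) := by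
  have hneg : (fun q => -Real.sin (dhTheta rev θ0 q b)) ∈ Feat rev (Pi.single b 1) :=
    Submodule.neg_mem _ (feat_sinTheta θ0 b)
  fin_cases r <;> fin_cases c <;> simp [RzMat] <;>
    first
    | exact feat_cosTheta θ0 b
    | exact feat_sinTheta θ0 b
    | exact hneg
    | exact feat_const _ _

theorem feat_Rrel (b : Fin n) (r c : Fin 3) :
    (fun q => dhRrel rev θ0 αDH q b r c) ∈ Feat rev (Pi.single b 1) :=
  feat_matMul (N := fun _ => RxMat (αDH b)) (E := 0) (feat_Rz θ0 b) (fun _ _ => feat_const _ _)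
    (fun _ => le_rfl) r c

theorem feat_Lrel (b : Fin n) (r : Fin 3) :
    (fun q => dhLrel rev θ0 d0 aDH q b r) ∈ Feat rev (Pi.single b 1) := by
  refine feat_add ?_ (feat_mulVec (v := fun _ => ![aDH b, 0, 0]) (E := 0) (feat_Rz θ0 b)
    (fun _ => feat_const _ _) (fun _ => le_rfl) r)
  fin_cases r
  · exact feat_const _ _
  · exact feat_const _ _
  · exact feat_dhD d0 b

theorem RzMat_orth (t : ℝ) : (RzMat t)ᵀ * RzMat t = 1 := by
  have := Real.sin_sq_add_cos_sq t
  ext r c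
  fin_cases r <;> fin_cases c <;> simp [RzMat, Matrix.mul_apply, Fin.sum_univ_three] <;> linarith

theorem RxMat_orth (t : ℝ) : (RxMat t)ᵀ * RxMat t = 1 := by
  have := Real.sin_sq_add_cos_sq t
  ext r c
  fin_cases r <;> fin_cases c <;> simp [RxMat, Matrix.mul_apply, Fin.sum_univ_three] <;> linarith

theorem mul_orth {A B : Matrix (Fin 3) (Fin 3) ℝ} (hA : Aᵀ * A = 1) (hB : Bᵀ * B = 1) :
    (A * B)ᵀ * (A * B) = 1 := by
  rw [Matrix.transpose_mul, Matrix.mul_assoc, ← Matrix.mul_assoc Aᵀ, hA, Matrix.one_mul, hB]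

theorem dhR0_orth (q : Fin n → ℝ) (j : ℕ) :
    (dhR0 rev θ0 αDH q j)ᵀ * dhR0 rev θ0 αDH q j = 1 := by
  induction j with
  | zero => simp [dhR0]
  | succ j ih =>
    refine mul_orth ih ?_
    split_ifs
    · exact mul_orth (RzMat_orth _) (RxMat_orth _)
    · simp

/-- For `j ≤ i` the relative rotation `R_jᵀ R_i` is the product of the link rotations between
`j` and `i`, since the common factors cancel by orthogonality; so it has degree one in each joint
below `i`. -/
theorem feat_R0rel {j i : ℕ} (hji : j ≤ i) (r c : Fin 3) :
    (fun q => ((dhR0 rev θ0 αDH q j)ᵀ * dhR0 rev θ0 αDH q i) r c)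
      ∈ Feat rev (fun b => if b.val < i then 1 else 0) := by
  induction i, hji using Nat.le_induction generalizing r c with
  | base =>
    simp only [dhR0_orth]
    exact feat_const _ _
  | succ i _ ih =>
    simp only [dhR0, ← Matrix.mul_assoc]
    by_cases h : i < n
    · simp only [h, dif_pos]
      refine feat_matMul ih (feat_Rrel θ0 αDH ⟨i, h⟩) (fun b => ?_) r c
      by_cases hb : b = ⟨i, h⟩
      · subst hb
        simp
      · have : b.val ≠ i := fun h' => hb (Fin.ext h')
        simp only [Pi.single_apply, hb, if_false]
        split_ifs <;> omega
    · simp only [h, dif_neg, not_false_eq_true, Matrix.mul_one]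
      refine feat_mono (fun b => ?_) (ih r c)
      split_ifs <;> omega

theorem feat_R0 (i : ℕ) (r c : Fin 3) :
    (fun q => dhR0 rev θ0 αDH q i r c) ∈ Feat rev (fun b => if b.val < i then 1 else 0) := by
  simpa [dhR0] using feat_R0rel (rev := rev) θ0 αDH (Nat.zero_le i) r c

theorem feat_com (cloc : Fin n → Fin 3 → ℝ) (i : Fin n) (r : Fin 3) :
    (fun q => dhCom rev θ0 d0 aDH αDH cloc q i r) ∈ Feat rev (fun _ => 1) := by
  simp only [dhCom, Pi.add_apply, Finset.sum_apply]
  refine feat_add (feat_sum _ fun j _ => ?_)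
    (feat_mulVec (v := fun _ => cloc i) (E := 0) (feat_R0 θ0 αDH _) (fun _ => feat_const _ _)
      (fun b => ?_) r)
  · by_cases h : j ≤ i
    · simp only [h, if_true]
      refine feat_mulVec (feat_R0 θ0 αDH _) (feat_Lrel θ0 d0 aDH j) (fun b => ?_) r
      by_cases hb : b = j
      · subst hb
        simp
      · simp only [Pi.single_apply, hb, if_false]
        split_ifs <;> omega
    · simpa [h] using feat_const _ _
  · simp only [Pi.zero_apply]
    split_ifs <;> omega

theorem feat_Jlin (cloc : Fin n → Fin 3 → ℝ) (i : Fin n) (r : Fin 3) (k : Fin n) :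
    (fun q => dhJlin rev θ0 d0 aDH αDH cloc q i r k) ∈ Feat rev (fun _ => 1) :=
  feat_pd (feat_com θ0 d0 aDH αDH cloc i r) k

/-- The angular Jacobian expressed in the frame of link `i` has degree one in every joint, although
`R_i` and the angular Jacobian themselves share factors. -/
theorem feat_RtJang (i : Fin n) (r : Fin 3) (c : Fin n) :
    (fun q => ((dhR0 rev θ0 αDH q (i.val + 1))ᵀ * dhJang rev θ0 αDH q i) r c)
      ∈ Feat rev (fun _ => 1) := by
  by_cases h : c ≤ i
  · have e : (fun q => ((dhR0 rev θ0 αDH q (i.val + 1))ᵀ * dhJang rev θ0 αDH q i) r c) =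
        fun q => (if rev c then (1 : ℝ) else 0) *
          ((dhR0 rev θ0 αDH q c.val)ᵀ * dhR0 rev θ0 αDH q (i.val + 1)) 2 r := by
      funext q
      simp [Matrix.mul_apply, dhJang, h, Matrix.mulVec, dotProduct, Fin.sum_univ_three]
      split_ifs <;> ring
    rw [e]
    refine feat_smul _ (feat_mono (fun b => ?_) (feat_R0rel θ0 αDH ?_ 2 r))
    · split_ifs <;> omega
    · have : c.val ≤ i.val := h
      omega
  · simpa [Matrix.mul_apply, dhJang, h] using feat_const _ _

theorem feat_B (cloc : Fin n → Fin 3 → ℝ) (m : Fin n → ℝ)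
    (Iner : Fin n → Matrix (Fin 3) (Fin 3) ℝ) (j k : Fin n) :
    (fun q => dhB rev θ0 d0 aDH αDH cloc m Iner q j k) ∈ Feat rev (fun _ => 2) := by
  simp only [dhB, Matrix.sum_apply, Matrix.add_apply, Matrix.smul_apply, smul_eq_mul]
  refine feat_sum _ fun i _ => feat_add (feat_smul _ ?_) ?_
  · exact feat_matMul (M := fun q => (dhJlin rev θ0 d0 aDH αDH cloc q i)ᵀ)
      (fun r c => feat_Jlin θ0 d0 aDH αDH cloc i c r)
      (feat_Jlin θ0 d0 aDH αDH cloc i) (by simp) j k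
  · have e : ∀ q, (dhJang rev θ0 αDH q i)ᵀ * dhR0 rev θ0 αDH q (i.val + 1) * Iner i *
          (dhR0 rev θ0 αDH q (i.val + 1))ᵀ * dhJang rev θ0 αDH q i =
        ((dhR0 rev θ0 αDH q (i.val + 1))ᵀ * dhJang rev θ0 αDH q i)ᵀ *
          (Iner i * ((dhR0 rev θ0 αDH q (i.val + 1))ᵀ * dhJang rev θ0 αDH q i)) := by
      intro q
      simp only [Matrix.transpose_mul, Matrix.transpose_transpose, Matrix.mul_assoc]
    simp only [e]
    refine feat_matMul
      (M := fun q => ((dhR0 rev θ0 αDH q (i.val + 1))ᵀ * dhJang rev θ0 αDH q i)ᵀ)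
      (fun r c => feat_RtJang θ0 αDH i c r)
      (feat_matMul (M := fun _ => Iner i) (D := 0) (F := fun _ => 1) (fun _ _ => feat_const _ _)
        (feat_RtJang θ0 αDH i) (by simp)) (by simp) j k

theorem feat_grav (cloc : Fin n → Fin 3 → ℝ) (m : Fin n → ℝ) (g0 : Fin 3 → ℝ) (i : Fin n) :
    (fun q => dhGrav rev θ0 d0 aDH αDH cloc m g0 q i) ∈ Feat rev (fun _ => 2) := by
  refine feat_mono (D := fun _ => 1) (by simp) (feat_pd ?_ i)
  exact feat_sum _ fun j _ => feat_smul _ (feat_sum _ fun r _ => feat_smul _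
    (feat_com θ0 d0 aDH αDH cloc j r))

end kin

/-! ### Features in position, velocity products and acceleration -/

/-- The set of admissible multi-indices of the dynamic variables. -/
def dynAdm {n : ℕ} (rev : Fin n → Bool) : Set (DynVar n →₀ ℕ) :=
  {μ | (∀ b : Fin n,
          μ (Sum.inl (cVar b)) + μ (Sum.inl (sVar b)) ≤ 2 ∧
          μ (Sum.inl (xVar b)) ≤ 2 ∧
          (rev b = false → μ (Sum.inl (cVar b)) = 0 ∧ μ (Sum.inl (sVar b)) = 0) ∧
          (rev b = true → μ (Sum.inl (xVar b)) = 0)) ∧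
        (∑ jk : VelIdx n, μ (vVar jk)) + (∑ k : Fin n, μ (aVar k)) ≤ 1}

/-- Triples `(q, q̇, q̈)`. -/
abbrev DynState (n : ℕ) := (Fin n → ℝ) × (Fin n → ℝ) × (Fin n → ℝ)

/-- Evaluation of a formal polynomial as a function of `(q, q̇, q̈)`. -/
def dynEvalMap (n : ℕ) : MvPolynomial (DynVar n) ℝ →ₗ[ℝ] (DynState n → ℝ) :=
  LinearMap.pi fun z => (MvPolynomial.aeval (dynEval z.1 z.2.1 z.2.2)).toLinearMap

/-- The functions of `(q, q̇, q̈)` spanned by the admissible monomials. -/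
def DynFeat {n : ℕ} (rev : Fin n → Bool) : Submodule ℝ (DynState n → ℝ) :=
  (MvPolynomial.restrictSupport ℝ (dynAdm rev)).map (dynEvalMap n)

section dyn

variable {n : ℕ} {rev : Fin n → Bool}

theorem dynFeat_gen {a s x : Fin n → ℕ} (h : PosAdm rev (fun _ => 2) a s x)
    (v : VelIdx n → ℕ) (w : Fin n → ℕ) (hvw : ∑ jk, v jk + ∑ k, w k ≤ 1) :
    (fun z : DynState n => posMono a s x z.1 *
      ((∏ jk, (z.2.1 jk.val.1 * z.2.1 jk.val.2) ^ v jk) * ∏ k, z.2.2 k ^ w k))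
      ∈ DynFeat rev := by
  refine ⟨MvPolynomial.monomial (Finsupp.equivFunOnFinite.symm
    (Sum.elim (Sum.elim a (Sum.elim s x)) (Sum.elim v w))) 1, ?_, ?_⟩
  · rw [SetLike.mem_coe, MvPolynomial.mem_restrictSupport_iff]
    refine (Finset.coe_subset.2 MvPolynomial.support_monomial_subset).trans ?_
    rw [Finset.coe_singleton, Set.singleton_subset_iff]
    refine ⟨fun b => ?_, by simpa [vVar, aVar] using hvw⟩
    have := h b
    simp only [cVar, sVar, xVar, Finsupp.equivFunOnFinite_symm_apply_apply, Sum.elim_inl,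
      Sum.elim_inr]
    cases hb : rev b <;> simp [hb] at this ⊢ <;> omega
  · funext z
    simp only [dynEvalMap, LinearMap.pi_apply, AlgHom.toLinearMap_apply,
      MvPolynomial.aeval_monomial, map_one, one_mul]
    rw [Finsupp.prod_fintype _ _ (by simp)]
    simp only [Fintype.prod_sum_type, Finsupp.equivFunOnFinite_symm_apply_apply, Sum.elim_inl,
      Sum.elim_inr, dynEval, posEval, posMono, Finset.prod_mul_distrib]
    ring

theorem dynFeat_mul {f : (Fin n → ℝ) → ℝ} (hf : f ∈ Feat rev (fun _ => 2))
    (v : VelIdx n → ℕ) (w : Fin n → ℕ) (hvw : ∑ jk, v jk + ∑ k, w k ≤ 1) :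
    (fun z : DynState n => f z.1 *
      ((∏ jk, (z.2.1 jk.val.1 * z.2.1 jk.val.2) ^ v jk) * ∏ k, z.2.2 k ^ w k))
      ∈ DynFeat rev := by
  induction hf using Submodule.span_induction with
  | mem f hf =>
    obtain ⟨a, s, x, h, rfl⟩ := hf
    exact dynFeat_gen h v w hvw
  | zero =>
    convert Submodule.zero_mem (DynFeat rev) using 1
    funext z
    simp
  | add f g _ _ ihf ihg =>
    convert Submodule.add_mem _ ihf ihg using 1
    funext z
    simp [add_mul]
  | smul c f _ ih =>
    convert Submodule.smul_mem _ c ih using 1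
    funext z
    simp [mul_assoc]

theorem dynFeat_pos {f : (Fin n → ℝ) → ℝ} (hf : f ∈ Feat rev (fun _ => 2)) :
    (fun z : DynState n => f z.1) ∈ DynFeat rev := by
  simpa using dynFeat_mul hf 0 0 (by simp)

theorem dynFeat_acc {f : (Fin n → ℝ) → ℝ} (hf : f ∈ Feat rev (fun _ => 2)) (k : Fin n) :
    (fun z : DynState n => f z.1 * z.2.2 k) ∈ DynFeat rev := by
  simpa [Pi.single_apply, pow_ite] using dynFeat_mul hf 0 (Pi.single k 1) (by simp)

theorem dynFeat_vel {f : (Fin n → ℝ) → ℝ} (hf : f ∈ Feat rev (fun _ => 2)) (k j : Fin n) :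
    (fun z : DynState n => f z.1 * z.2.1 k * z.2.1 j) ∈ DynFeat rev := by
  wlog hkj : k ≤ j generalizing k j
  · simpa only [mul_right_comm] using this j k (le_of_not_ge hkj)
  simpa [Pi.single_apply, pow_ite, mul_assoc] using
    dynFeat_mul hf (Pi.single (⟨(k, j), hkj⟩ : VelIdx n) 1) 0 (by simp)

theorem dynFeat_sum {ι : Type*} (t : Finset ι) {f : ι → DynState n → ℝ}
    (hf : ∀ i ∈ t, f i ∈ DynFeat rev) : (fun z => ∑ i ∈ t, f i z) ∈ DynFeat rev := by
  convert Submodule.sum_mem _ hf using 1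
  funext q
  simp

end dyn

/-- The rigid-body inverse dynamics lies in the span of the GIP
kernel's monomial features: for every joint `i` there are real weights `w_α`, indexed by
the multi-indices `α ∈ A` (here encoded by a polynomial `P` whose support is contained
in `A`), such that `τ_i(q,q̇,q̈) = Σ_{α ∈ A} w_α x̄^α`, where `x̄` is the augmented input
and `A` consists of the multi-indices in which, for each revolute `b`,
`deg c_b + deg s_b ≤ 2`; for each prismatic `b`, `deg x_b ≤ 2`; and the total degree in
the acceleration and velocity-product coordinates is at most `1`. -/
theorem inverse_dynamics_in_gip_feature_span
    {n : ℕ} (rev : Fin n → Bool) (θ0 d0 aDH αDH : Fin n → ℝ)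
    (cloc : Fin n → Fin 3 → ℝ) (m : Fin n → ℝ)
    (Iner : Fin n → Matrix (Fin 3) (Fin 3) ℝ) (hIner : ∀ i, (Iner i).IsSymm)
    (g0 : Fin 3 → ℝ) (i : Fin n) :
    ∃ P : MvPolynomial (DynVar n) ℝ,
      (∀ μ ∈ P.support,
        (∀ b : Fin n,
          μ (Sum.inl (cVar b)) + μ (Sum.inl (sVar b)) ≤ 2 ∧
          μ (Sum.inl (xVar b)) ≤ 2 ∧
          (rev b = false → μ (Sum.inl (cVar b)) = 0 ∧ μ (Sum.inl (sVar b)) = 0) ∧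
          (rev b = true → μ (Sum.inl (xVar b)) = 0)) ∧
        (∑ jk : VelIdx n, μ (vVar jk)) + (∑ k : Fin n, μ (aVar k)) ≤ 1) ∧
      ∀ q qd qdd : Fin n → ℝ,
        MvPolynomial.eval (dynEval q qd qdd) P
          = dhTau rev θ0 d0 aDH αDH cloc m Iner g0 q qd qdd i := by
  have hB := feat_B (rev := rev) θ0 d0 aDH αDH cloc m Iner
  have key : (fun z : DynState n =>
      dhTau rev θ0 d0 aDH αDH cloc m Iner g0 z.1 z.2.1 z.2.2 i) ∈ DynFeat rev := by
    refine Submodule.add_mem _ (Submodule.add_mem _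
      (dynFeat_sum _ fun k _ => dynFeat_acc (hB i k) k) ?_)
      (dynFeat_pos (feat_grav θ0 d0 aDH αDH cloc m g0 i))
    exact dynFeat_sum _ fun j _ => dynFeat_sum _ fun k _ =>
      dynFeat_vel (feat_sub (feat_pd (hB i j) k) (feat_smul _ (feat_pd (hB j k) i))) k j
  obtain ⟨P, hP, hEval⟩ := key
  rw [SetLike.mem_coe, MvPolynomial.mem_restrictSupport_iff] at hP
  refine ⟨P, fun μ hμ => hP hμ, fun q qd qdd => ?_⟩
  exact congrFun hEval (q, qd, qdd)
end
end
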